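/- arXiv:1504.07661 — 2 statements merged into one kernel-verified Lean document; each statement's English description precedes it below -/
import Mathlib

section
/- (Lemma 2) Let p, p' ∈ ℤ² with p.x ≤ p'.x and let ≺, ≺' be linear orders on ℤ. There exists a point p₃ ∈ Q¹_p ∩ Q¹_{p'} that has a conflicting priority with respect to (≺,p) and (≺',p') if and only if some integers a ≠ b form a bad pair for (≺,p) and (≺',p'). -/
open scoped Classical

/-- Points of the digital plane. -/
abbrev Pt : Type := ℤ × ℤ

/-- `q` lies in the closed first quadrant of `p`. -/
def Quad1 (p q : Pt) : Prop := p.1 ≤ q.1 ∧ p.2 ≤ q.2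

/-- The number of elements `y` of the finite set `J` with `y ≺ x` or `y = x`. -/
noncomputable def rankLE (lt : ℤ → ℤ → Prop) (J : Finset ℤ) (x : ℤ) : ℤ :=
  ((J.filter fun y => lt y x ∨ y = x).card : ℤ)

/-- `x` is among the `k` smallest elements of `J` with respect to the linear order `lt`. -/
def AmongSmallest (lt : ℤ → ℤ → Prop) (J : Finset ℤ) (k x : ℤ) : Prop :=
  x ∈ J ∧ rankLE lt J x ≤ k

/-- The interval `I(p,q) = [p.x+p.y, q.x+q.y-1]`. -/
noncomputable def Ival (p q : Pt) : Finset ℤ := Finset.Icc (p.1 + p.2) (q.1 + q.2 - 1)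

/-- Membership in `H(lt,p,q)`: the `q.x - p.x` smallest elements of `I(p,q)` w.r.t. `lt`. -/
def Hmem (lt : ℤ → ℤ → Prop) (p q : Pt) (a : ℤ) : Prop :=
  AmongSmallest lt (Ival p q) (q.1 - p.1) a

/-- The digital segment `R(lt,p,q)` for `q ∈ Q¹_p`, generated by the linear order `lt`. -/
noncomputable def seg (lt : ℤ → ℤ → Prop) (p q : Pt) : Set Pt :=
  {r : Pt | p.1 ≤ r.1 ∧ r.1 ≤ q.1 ∧ p.2 ≤ r.2 ∧ r.2 ≤ q.2 ∧
    p.1 + p.2 ≤ r.1 + r.2 ∧ r.1 + r.2 ≤ q.1 + q.2 ∧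
    r.1 - p.1 =
      (((Finset.Icc (p.1 + p.2) (r.1 + r.2 - 1)).filter fun a => Hmem lt p q a).card : ℤ)}

/-- `(t₁,t₂)` is a witness to the violation of (S3) for the pair of sets `(S,S')`. -/
def Witness (S S' : Set Pt) (t₁ t₂ : Pt) : Prop :=
  t₁ ∈ S ∧ t₁ ∈ S' ∧ t₂ ∈ S ∧ t₂ ∈ S' ∧
  t₁.1 + t₁.2 < t₂.1 + t₂.2 ∧
  ((t₁.1 + 1, t₁.2) : Pt) ∈ S ∧ ((t₁.1, t₁.2 + 1) : Pt) ∈ S' ∧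
  ((t₂.1, t₂.2 - 1) : Pt) ∈ S ∧ ((t₂.1 - 1, t₂.2) : Pt) ∈ S'

/-- `a ≠ b` form a bad pair for `(lt,p)` and `(lt',p')`, where `p.x ≤ p'.x`. -/
def BadPair (lt lt' : ℤ → ℤ → Prop) (p p' : Pt) (a b : ℤ) : Prop :=
  a ≠ b ∧ ∃ C ℓ : ℤ, p.1 + p.2 ≤ C ∧ p'.1 + p'.2 ≤ C ∧
    a ∈ Finset.Icc (p.1 + p.2) (C - 1) ∧ b ∈ Finset.Icc (p.1 + p.2) (C - 1) ∧
    a ∈ Finset.Icc (p'.1 + p'.2) (C - 1) ∧ b ∈ Finset.Icc (p'.1 + p'.2) (C - 1) ∧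
    AmongSmallest lt (Finset.Icc (p.1 + p.2) (C - 1)) ℓ a ∧
    ¬ AmongSmallest lt (Finset.Icc (p.1 + p.2) (C - 1)) ℓ b ∧
    AmongSmallest lt' (Finset.Icc (p'.1 + p'.2) (C - 1)) (ℓ - (p'.1 - p.1)) b ∧
    ¬ AmongSmallest lt' (Finset.Icc (p'.1 + p'.2) (C - 1)) (ℓ - (p'.1 - p.1)) a

/-- Bad pair for arbitrary `p, p'`: for `p.x > p'.x` the roles of `p` and `p'` are exchanged. -/
def BadPairSym (lt lt' : ℤ → ℤ → Prop) (p p' : Pt) (a b : ℤ) : Prop :=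
  (p.1 ≤ p'.1 ∧ BadPair lt lt' p p' a b) ∨ (p'.1 ≤ p.1 ∧ BadPair lt' lt p' p a b)

/-- Adjacency in the unit grid graph on `ℤ²`. -/
def GridAdj (u v : Pt) : Prop := |u.1 - v.1| + |u.2 - v.2| = 1

/-- `S` is the vertex set of a path from `p` to `q` in the unit grid graph. -/
def IsGridPath (S : Set Pt) (p q : Pt) : Prop :=
  ∃ (n : ℕ) (f : ℕ → Pt), f 0 = p ∧ f n = q ∧
    (∀ i, i < n → GridAdj (f i) (f (i + 1))) ∧
    (∀ i j, i ≤ n → j ≤ n → f i = f j → i = j) ∧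
    S = {r : Pt | ∃ i, i ≤ n ∧ f i = r}

/-- The pair `p, q` has nonnegative slope. -/
def NonnegPair (p q : Pt) : Prop := (p.1 ≤ q.1 ∧ p.2 ≤ q.2) ∨ (q.1 ≤ p.1 ∧ q.2 ≤ p.2)

/-- A nonnegative-slope digital segment system `R` is a CDS: properties (S1)-(S5). -/
def IsCDS (R : Pt → Pt → Set Pt) : Prop :=
  ∀ p q : Pt, NonnegPair p q →
    IsGridPath (R p q) p q ∧
    R p q = R q p ∧
    (∀ r s : Pt, r ∈ R p q → s ∈ R p q → NonnegPair r s → R r s ⊆ R p q) ∧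
    (∃ r : Pt, r ∉ R p q ∧ NonnegPair p r ∧ R p q ⊆ R p r) ∧
    (p.1 = q.1 → ∀ r ∈ R p q, r.1 = p.1) ∧
    (p.2 = q.2 → ∀ r ∈ R p q, r.2 = p.2)

/-- The nonnegative-slope digital segment system generated by an assignment of
linear orders to the points of `ℤ²`. -/
noncomputable def genR (ord : Pt → ℤ → ℤ → Prop) (p q : Pt) : Set Pt :=
  if p.1 ≤ q.1 ∧ p.2 ≤ q.2 then seg (ord p) p q else seg (ord q) q p

/-- The orders `lt` at `p` and `lt'` at `p'` are in agreement. -/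
def Agree (p p' : Pt) (lt lt' : ℤ → ℤ → Prop) : Prop :=
  ∀ a b : ℤ, max p.1 p'.1 + max p.2 p'.2 ≤ a → max p.1 p'.1 + max p.2 p'.2 ≤ b →
    (lt a b ↔ lt' a b)

/-- Two digital segments are smooth: the antidiagonal distance function is
monotonically nondecreasing or nonincreasing on its domain. -/
def SmoothPair (S S' : Set Pt) : Prop :=
  (∀ r₁ s₁ r₂ s₂ : Pt, r₁ ∈ S → s₁ ∈ S' → r₂ ∈ S → s₂ ∈ S' →
      r₁.1 + r₁.2 = s₁.1 + s₁.2 → r₂.1 + r₂.2 = s₂.1 + s₂.2 →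
      r₁.1 + r₁.2 ≤ r₂.1 + r₂.2 → r₁.1 - s₁.1 ≤ r₂.1 - s₂.1) ∨
  (∀ r₁ s₁ r₂ s₂ : Pt, r₁ ∈ S → s₁ ∈ S' → r₂ ∈ S → s₂ ∈ S' →
      r₁.1 + r₁.2 = s₁.1 + s₁.2 → r₂.1 + r₂.2 = s₂.1 + s₂.2 →
      r₁.1 + r₁.2 ≤ r₂.1 + r₂.2 → r₂.1 - s₂.1 ≤ r₁.1 - s₁.1)

/-- The waterline assignment of linear orders. -/
def waterOrd (p : Pt) : ℤ → ℤ → Prop := fun a b =>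
  if 0 ≤ p.2 then a < b
  else (p.1 ≤ a ∧ p.1 ≤ b ∧ a < b) ∨ (p.1 ≤ a ∧ b < p.1) ∨ (a < p.1 ∧ b < p.1 ∧ b < a)

/-- `p₃` has a conflicting priority with respect to `(lt,p)` and `(lt',p')`. -/
def ConflictPriority (lt lt' : ℤ → ℤ → Prop) (p p' p₃ : Pt) : Prop :=
  ∃ a b : ℤ, a ∈ Ival p p₃ ∧ a ∈ Ival p' p₃ ∧ b ∈ Ival p p₃ ∧ b ∈ Ival p' p₃ ∧
    Hmem lt p p₃ b ∧ ¬ Hmem lt p p₃ a ∧ Hmem lt' p' p₃ a ∧ ¬ Hmem lt' p' p₃ b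


theorem rankLE_nonneg (lt : ℤ → ℤ → Prop) (J : Finset ℤ) (x : ℤ) : 0 ≤ rankLE lt J x := by
  unfold rankLE; positivity

theorem rankLE_le (lt : ℤ → ℤ → Prop) (s C x : ℤ) (h : s ≤ C) :
    rankLE lt (Finset.Icc s (C - 1)) x ≤ C - s := by
  unfold rankLE
  have h1 := Finset.card_filter_le (Finset.Icc s (C - 1)) (fun y => lt y x ∨ y = x)
  rw [Int.card_Icc] at h1
  omega

/-- Lemma 2: there is a point `p₃ ∈ Q¹_p ∩ Q¹_{p'}` with a conflicting
priority w.r.t. `(≺,p)` and `(≺',p')` iff `(≺,p)` and `(≺',p')` have a bad pair. -/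
theorem statement3 (p p' : Pt) (hx : p.1 ≤ p'.1) (lt lt' : ℤ → ℤ → Prop)
    [IsStrictTotalOrder ℤ lt] [IsStrictTotalOrder ℤ lt'] :
    (∃ p₃ : Pt, Quad1 p p₃ ∧ Quad1 p' p₃ ∧ ConflictPriority lt lt' p p' p₃) ↔
      (∃ a b : ℤ, BadPair lt lt' p p' a b) := by
  constructor
  · rintro ⟨q, ⟨h1, h2⟩, ⟨h3, h4⟩, a, b, ha, ha', hb, hb', hbH, haH, haH', hbH'⟩
    have e : q.1 - p.1 - (p'.1 - p.1) = q.1 - p'.1 := by ring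
    refine ⟨b, a, ?_, q.1 + q.2, q.1 - p.1, by omega, by omega, hb, ha, hb', ha', hbH, haH, ?_, ?_⟩
    · rintro rfl
      exact haH hbH
    · rw [e]; exact haH'
    · rw [e]; exact hbH'
  · rintro ⟨a, b, -, C, l, hC, hC', ha, hb, ha', hb', h1, h2, h3, h4⟩
    have n1 := rankLE_nonneg lt (Finset.Icc (p.1 + p.2) (C - 1)) a
    have n2 := rankLE_nonneg lt' (Finset.Icc (p'.1 + p'.2) (C - 1)) b
    have n3 := rankLE_le lt (p.1 + p.2) C b hC
    have n4 := rankLE_le lt' (p'.1 + p'.2) C a hC'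
    have m1 := h1.2
    have m3 := h3.2
    have m2 : l < rankLE lt (Finset.Icc (p.1 + p.2) (C - 1)) b :=
      not_le.mp fun h => h2 ⟨hb, h⟩
    have m4 : l - (p'.1 - p.1) < rankLE lt' (Finset.Icc (p'.1 + p'.2) (C - 1)) a :=
      not_le.mp fun h => h4 ⟨ha', h⟩
    have e1 : p.1 + l + (C - (p.1 + l)) = C := by ring
    have e2 : p.1 + l - p.1 = l := by ring
    have e3 : p.1 + l - p'.1 = l - (p'.1 - p.1) := by ring
    refine ⟨(p.1 + l, C - (p.1 + l)), ⟨?_, ?_⟩, ⟨?_, ?_⟩, b, a, ?_⟩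
    · show p.1 ≤ p.1 + l
      omega
    · show p.2 ≤ C - (p.1 + l)
      omega
    · show p'.1 ≤ p.1 + l
      omega
    · show p'.2 ≤ C - (p.1 + l)
      omega
    · simp only [Hmem, Ival, e1, e2, e3]
      exact ⟨hb, hb', ha, ha', h1, h2, h3, h4⟩
end

section
/- Let ≺ be a single fixed linear order on ℤ and assign ≺_p := ≺ to every point p ∈ ℤ². Then the generated nonnegative-slope digital segment system satisfies all five properties (S1)–(S5), i.e., it is a CDS. -/
open scoped Classical

section Aux

/-- Number of integers in `[s, t-1]` satisfying `P`. -/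
noncomputable def cnt9 (P : ℤ → Prop) (s t : ℤ) : ℤ :=
  (((Finset.Icc s (t - 1)).filter fun a => P a).card : ℤ)

theorem cnt9_nonneg (P : ℤ → Prop) (s t : ℤ) : 0 ≤ cnt9 P s t := by
  unfold cnt9; positivity

theorem cnt9_le (P : ℤ → Prop) {s t : ℤ} (h : s ≤ t) : cnt9 P s t ≤ t - s := by
  unfold cnt9
  have h1 := Finset.card_filter_le (Finset.Icc s (t - 1)) (fun a => P a)
  rw [Int.card_Icc] at h1
  omega

theorem cnt9_self (P : ℤ → Prop) (s : ℤ) : cnt9 P s s = 0 := by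
  have h1 := cnt9_nonneg P s s
  have h2 := cnt9_le P (le_refl s)
  omega

theorem cnt9_add (P : ℤ → Prop) {s t u : ℤ} (h : s ≤ t) (h' : t ≤ u) :
    cnt9 P s t + cnt9 P t u = cnt9 P s u := by
  unfold cnt9
  rw [← Nat.cast_add, ← Finset.card_union_of_disjoint]
  · congr 2
    ext x
    simp only [Finset.mem_union, Finset.mem_filter, Finset.mem_Icc]
    constructor
    · rintro (⟨h1, h2⟩ | ⟨h1, h2⟩)
      · exact ⟨by omega, h2⟩
      · exact ⟨by omega, h2⟩
    · rintro ⟨h1, h2⟩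
      by_cases hx : x < t
      · left; exact ⟨by omega, h2⟩
      · right; exact ⟨by omega, h2⟩
  · rw [Finset.disjoint_left]
    intro x h1 h2
    simp only [Finset.mem_filter, Finset.mem_Icc] at h1 h2
    omega

theorem cnt9_one (P : ℤ → Prop) (s : ℤ) : cnt9 P s (s + 1) = if P s then 1 else 0 := by
  unfold cnt9
  have : Finset.Icc s (s + 1 - 1) = {s} := by
    ext x; simp only [Finset.mem_Icc, Finset.mem_singleton]; omega
  rw [this, Finset.filter_singleton]
  split_ifs <;> simp

theorem cnt9_congr {P Q : ℤ → Prop} {s t : ℤ} (h : ∀ x, s ≤ x → x < t → (P x ↔ Q x)) :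
    cnt9 P s t = cnt9 Q s t := by
  unfold cnt9
  congr 2
  apply Finset.filter_congr
  intro x hx
  rw [Finset.mem_Icc] at hx
  exact h x (by omega) (by omega)

variable (lt : ℤ → ℤ → Prop) [IsStrictTotalOrder ℤ lt]

theorem small_unique (J H : Finset ℤ) (hs : H ⊆ J)
    (hd : ∀ x ∈ H, ∀ y ∈ J, lt y x → y ∈ H) (x : ℤ) (hx : x ∈ J) :
    AmongSmallest lt J (H.card : ℤ) x ↔ x ∈ H := by
  unfold AmongSmallest rankLE
  constructor
  · rintro ⟨-, h⟩
    by_contra hn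
    have hsub : insert x H ⊆ J.filter fun y => lt y x ∨ y = x := by
      intro z hz
      rw [Finset.mem_insert] at hz
      rw [Finset.mem_filter]
      rcases hz with rfl | hz
      · exact ⟨hx, Or.inr rfl⟩
      · refine ⟨hs hz, ?_⟩
        rcases trichotomous_of lt z x with h1 | h1 | h1
        · exact Or.inl h1
        · exact Or.inr h1
        · exact absurd (hd z hz x hx h1) hn
    have := Finset.card_le_card hsub
    rw [Finset.card_insert_of_notMem hn] at this
    omega
  · intro h
    refine ⟨hx, ?_⟩
    have hsub : (J.filter fun y => lt y x ∨ y = x) ⊆ H := by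
      intro z hz
      rw [Finset.mem_filter] at hz
      rcases hz.2 with h1 | rfl
      · exact hd x h z hz.1 h1
      · exact h
    exact_mod_cast Finset.card_le_card hsub

theorem exists_small (J : Finset ℤ) (k : ℕ) (hk : k ≤ J.card) :
    ∃ H ⊆ J, H.card = k ∧ ∀ x ∈ H, ∀ y ∈ J, lt y x → y ∈ H := by
  induction k with
  | zero => exact ⟨∅, by simp, by simp, by simp⟩
  | succ k ih =>
    obtain ⟨H, hs, hc, hd⟩ := ih (by omega)
    have hne : (J \ H).Nonempty := by
      rw [← Finset.card_pos, Finset.card_sdiff_of_subset hs]; omega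
    obtain ⟨x, hx, hmin⟩ := Finset.exists_min_image (J \ H)
      (fun x => (J.filter fun y => lt y x ∨ y = x).card) hne
    have hx' := Finset.mem_sdiff.1 hx
    refine ⟨insert x H, ?_, ?_, ?_⟩
    · intro z hz
      rcases Finset.mem_insert.1 hz with rfl | hz
      · exact hx'.1
      · exact hs hz
    · rw [Finset.card_insert_of_notMem hx'.2, hc]
    · intro z hz y hy hlt
      rw [Finset.mem_insert] at hz ⊢
      rcases hz with rfl | hz
      · by_contra hn
        push Not at hn
        have h1 := hmin y (Finset.mem_sdiff.2 ⟨hy, hn.2⟩)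
        have h2 : (J.filter fun w => lt w y ∨ w = y) ⊂ (J.filter fun w => lt w z ∨ w = z) := by
          rw [Finset.ssubset_iff_of_subset]
          · refine ⟨z, ?_, ?_⟩
            · simp [hx'.1]
            · rw [Finset.mem_filter]
              rintro ⟨-, h3 | h3⟩
              · exact irrefl_of lt z (trans_of lt h3 hlt)
              · exact hn.1 h3.symm
          · intro w hw
            rw [Finset.mem_filter] at hw ⊢
            refine ⟨hw.1, Or.inl ?_⟩
            rcases hw.2 with h3 | rfl
            · exact trans_of lt h3 hlt
            · exact hlt
        have := Finset.card_lt_card h2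
        omega
      · exact Or.inr (hd z hz y hy hlt)

theorem small_card (J : Finset ℤ) (k : ℤ) (hk : 0 ≤ k) (hk' : k ≤ J.card) :
    ((J.filter fun a => AmongSmallest lt J k a).card : ℤ) = k := by
  lift k to ℕ using hk
  obtain ⟨H, hs, hc, hd⟩ := exists_small lt J k (by exact_mod_cast hk')
  have : (J.filter fun a => AmongSmallest lt J k a) = H := by
    ext x
    rw [Finset.mem_filter, ← hc]
    constructor
    · rintro ⟨h1, h2⟩
      exact (small_unique lt J H hs hd x h1).1 h2
    · intro h
      exact ⟨hs h, (small_unique lt J H hs hd x (hs h)).2 h⟩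
  rw [this, hc]

theorem rank_mono (J : Finset ℤ) {x y : ℤ} (h : lt y x) : rankLE lt J y ≤ rankLE lt J x := by
  unfold rankLE
  have : (J.filter fun w => lt w y ∨ w = y) ⊆ (J.filter fun w => lt w x ∨ w = x) := by
    intro w hw
    rw [Finset.mem_filter] at hw ⊢
    refine ⟨hw.1, Or.inl ?_⟩
    rcases hw.2 with h3 | rfl
    · exact trans_of lt h3 h
    · exact h
  exact_mod_cast Finset.card_le_card this

theorem total_cnt (p q : Pt) (h : Quad1 p q) :
    cnt9 (Hmem lt p q) (p.1 + p.2) (q.1 + q.2) = q.1 - p.1 := by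
  obtain ⟨h1, h2⟩ := h
  unfold cnt9 Hmem Ival
  apply small_card
  · omega
  · rw [Int.card_Icc]; omega

theorem mem_seg9 (p q : Pt) (h : Quad1 p q) (r : Pt) :
    r ∈ seg lt p q ↔ p.1 + p.2 ≤ r.1 + r.2 ∧ r.1 + r.2 ≤ q.1 + q.2 ∧
      r.1 - p.1 = cnt9 (Hmem lt p q) (p.1 + p.2) (r.1 + r.2) := by
  constructor
  · rintro ⟨-, -, -, -, h1, h2, h3⟩
    exact ⟨h1, h2, h3⟩
  · rintro ⟨h1, h2, h3⟩
    have ht := total_cnt lt p q h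
    have ha := cnt9_add (Hmem lt p q) h1 h2
    have n1 := cnt9_nonneg (Hmem lt p q) (p.1 + p.2) (r.1 + r.2)
    have n2 := cnt9_nonneg (Hmem lt p q) (r.1 + r.2) (q.1 + q.2)
    have l1 := cnt9_le (Hmem lt p q) h1
    have l2 := cnt9_le (Hmem lt p q) h2
    exact ⟨by omega, by omega, by omega, by omega, h1, h2, h3⟩

theorem seg_sub (p q : Pt) (h : Quad1 p q) (r s : Pt) (hr : r ∈ seg lt p q)
    (hs : s ∈ seg lt p q) (hrs : Quad1 r s) : seg lt r s ⊆ seg lt p q := by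
  rw [mem_seg9 lt p q h] at hr hs
  obtain ⟨r1, r2, r3⟩ := hr
  obtain ⟨s1, s2, s3⟩ := hs
  have hle : r.1 + r.2 ≤ s.1 + s.2 := add_le_add hrs.1 hrs.2
  have hcard : cnt9 (Hmem lt p q) (r.1 + r.2) (s.1 + s.2) = s.1 - r.1 := by
    have := cnt9_add (Hmem lt p q) r1 hle
    omega
  have key : ∀ x, r.1 + r.2 ≤ x → x < s.1 + s.2 → (Hmem lt r s x ↔ Hmem lt p q x) := by
    intro x hx1 hx2
    have hx : x ∈ Ival r s := by unfold Ival; rw [Finset.mem_Icc]; omega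
    have hu := small_unique lt (Ival r s) ((Ival r s).filter fun a => Hmem lt p q a)
      (Finset.filter_subset _ _) (by
        intro z hz y hy hlt
        rw [Finset.mem_filter] at hz ⊢
        refine ⟨hy, ?_, ?_⟩
        · unfold Ival at hy ⊢
          rw [Finset.mem_Icc] at hy ⊢
          omega
        · exact (rank_mono lt _ hlt).trans hz.2.2) x hx
    have hc : (((Ival r s).filter fun a => Hmem lt p q a).card : ℤ) = s.1 - r.1 := hcard
    rw [hc, Finset.mem_filter] at hu
    unfold Hmem at hu ⊢
    rw [hu]
    exact ⟨fun h => h.2, fun h => ⟨hx, h⟩⟩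
  intro u hu
  rw [mem_seg9 lt r s hrs] at hu
  rw [mem_seg9 lt p q h]
  obtain ⟨u1, u2, u3⟩ := hu
  rw [cnt9_congr (Q := Hmem lt p q) (fun x h1 h2 => key x h1 (by omega))] at u3
  have := cnt9_add (Hmem lt p q) r1 u1
  exact ⟨by omega, by omega, by omega⟩

theorem seg_left (p q : Pt) (h : Quad1 p q) : p ∈ seg lt p q := by
  rw [mem_seg9 lt p q h, cnt9_self]
  obtain ⟨h1, h2⟩ := h
  omega

theorem seg_right (p q : Pt) (h : Quad1 p q) : q ∈ seg lt p q := by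
  rw [mem_seg9 lt p q h, total_cnt lt p q h]
  obtain ⟨h1, h2⟩ := h
  omega

theorem seg_path (p q : Pt) (h : Quad1 p q) : IsGridPath (seg lt p q) p q := by
  have hq : p.1 ≤ q.1 ∧ p.2 ≤ q.2 := h
  have htot := total_cnt lt p q h
  set a := p.1 + p.2 with ha
  set F : ℤ → ℤ := fun t => cnt9 (Hmem lt p q) a t with hF
  have hn : a + ((q.1 + q.2 - a).toNat : ℤ) = q.1 + q.2 := by omega
  refine ⟨(q.1 + q.2 - a).toNat, fun i => (p.1 + F (a + i), p.2 + i - F (a + i)),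
    ?_, ?_, ?_, ?_, ?_⟩
  · simp [hF, cnt9_self]
  · simp only [hn]
    have : F (q.1 + q.2) = q.1 - p.1 := htot
    rw [this]
    apply Prod.ext <;> simp only <;> omega
  · intro i _
    have h1 : F (a + i) + cnt9 (Hmem lt p q) (a + i) (a + i + 1) = F (a + i + 1) :=
      cnt9_add (Hmem lt p q) (by omega) (by omega)
    rw [cnt9_one] at h1
    unfold GridAdj
    have h2 : a + ((i + 1 : ℕ) : ℤ) = a + i + 1 := by push_cast; ring
    simp only [h2, ← h1]
    push_cast
    split_ifs
    · have e1 : p.1 + F (a + i) - (p.1 + (F (a + i) + 1)) = -1 := by ring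
      have e2 : p.2 + (i : ℤ) - F (a + i) - (p.2 + (i + 1) - (F (a + i) + 1)) = 0 := by ring
      rw [e1, e2]; rfl
    · have e1 : p.1 + F (a + i) - (p.1 + (F (a + i) + 0)) = 0 := by ring
      have e2 : p.2 + (i : ℤ) - F (a + i) - (p.2 + (i + 1) - (F (a + i) + 0)) = -1 := by ring
      rw [e1, e2]; rfl
  · intro i j _ _ he
    rw [Prod.mk.injEq] at he
    omega
  · ext r
    rw [mem_seg9 lt p q h]
    simp only [Set.mem_setOf_eq]
    constructor
    · rintro ⟨h1, h2, h3⟩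
      refine ⟨(r.1 + r.2 - a).toNat, by omega, ?_⟩
      have h4 : a + ((r.1 + r.2 - a).toNat : ℤ) = r.1 + r.2 := by omega
      have h5 : F (r.1 + r.2) = r.1 - p.1 := h3.symm
      rw [h4, h5]
      apply Prod.ext <;> simp only <;> omega
    · rintro ⟨i, hi, rfl⟩
      have h4 : p.1 + F (a + i) + (p.2 + i - F (a + i)) = a + i := by rw [ha]; ring
      simp only [h4]
      refine ⟨by omega, by omega, ?_⟩
      simp [hF, ha]

theorem path_symm {S : Set Pt} {p q : Pt} (h : IsGridPath S p q) : IsGridPath S q p := by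
  obtain ⟨n, f, h0, hn, hadj, hinj, hS⟩ := h
  refine ⟨n, fun i => f (n - i), by simpa using hn, by simpa using h0, ?_, ?_, ?_⟩
  · intro i hi
    have := hadj (n - (i + 1)) (by omega)
    have e : n - (i + 1) + 1 = n - i := by omega
    rw [e] at this
    unfold GridAdj at this ⊢
    rw [abs_sub_comm (f (n - i)).1, abs_sub_comm (f (n - i)).2]
    exact this
  · intro i j hi hj he
    have := hinj (n - i) (n - j) (by omega) (by omega) he
    omega
  · rw [hS]
    ext r
    constructor
    · rintro ⟨i, hi, rfl⟩
      exact ⟨n - i, by omega, by simp only; congr 1; omega⟩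
    · rintro ⟨i, hi, rfl⟩
      exact ⟨n - i, by omega, rfl⟩

theorem hmem_mono (p q r : Pt) (hs : q.1 + q.2 = r.1 + r.2) (h : q.1 ≤ r.1) (x : ℤ)
    (hx : Hmem lt p q x) : Hmem lt p r x := by
  unfold Hmem AmongSmallest Ival at *
  rw [← hs]
  exact ⟨hx.1, hx.2.trans (by omega)⟩

theorem hmem_mono' (p q r : Pt) (hs : q.1 + q.2 = r.1 + r.2) (h : r.1 ≤ q.1) (x : ℤ)
    (hx : Hmem lt q p x) : Hmem lt r p x := by
  unfold Hmem AmongSmallest Ival at *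
  rw [← hs]
  exact ⟨hx.1, hx.2.trans (by omega)⟩

theorem ext_right (p q : Pt) (h : Quad1 p q) :
    ∃ r, Quad1 p r ∧ q.1 + q.2 < r.1 + r.2 ∧ q ∈ seg lt p r := by
  have hq : p.1 ≤ q.1 ∧ p.2 ≤ q.2 := h
  have hA : Quad1 p (q.1, q.2 + 1) := ⟨hq.1, by simp only; omega⟩
  have hB : Quad1 p (q.1 + 1, q.2) := ⟨by simp only; omega, hq.2⟩
  by_cases hb : Hmem lt p (q.1, q.2 + 1) (q.1 + q.2)
  · refine ⟨(q.1 + 1, q.2), hB, by simp only; omega, ?_⟩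
    rw [mem_seg9 lt _ _ hB]
    have ht := total_cnt lt _ _ hB
    have hb' := hmem_mono lt p (q.1, q.2 + 1) (q.1 + 1, q.2) (by simp only; omega)
      (by simp only; omega) _ hb
    have e : q.1 + 1 + q.2 = q.1 + q.2 + 1 := by ring
    have h1 := cnt9_add (Hmem lt p (q.1 + 1, q.2)) (show p.1 + p.2 ≤ q.1 + q.2 by omega)
      (show q.1 + q.2 ≤ q.1 + q.2 + 1 by omega)
    rw [cnt9_one, if_pos hb'] at h1
    simp only [e] at ht ⊢
    exact ⟨by omega, by omega, by omega⟩
  · refine ⟨(q.1, q.2 + 1), hA, by simp only; omega, ?_⟩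
    rw [mem_seg9 lt _ _ hA]
    have ht := total_cnt lt _ _ hA
    have e : q.1 + (q.2 + 1) = q.1 + q.2 + 1 := by ring
    have h1 := cnt9_add (Hmem lt p (q.1, q.2 + 1)) (show p.1 + p.2 ≤ q.1 + q.2 by omega)
      (show q.1 + q.2 ≤ q.1 + q.2 + 1 by omega)
    rw [cnt9_one, if_neg hb] at h1
    simp only [e] at ht ⊢
    exact ⟨by omega, by omega, by omega⟩

theorem ext_left (p q : Pt) (h : Quad1 q p) :
    ∃ r, Quad1 r p ∧ r.1 + r.2 < q.1 + q.2 ∧ q ∈ seg lt r p := by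
  have hq : q.1 ≤ p.1 ∧ q.2 ≤ p.2 := h
  have hA : Quad1 (q.1, q.2 - 1) p := ⟨hq.1, by simp only; omega⟩
  have hB : Quad1 (q.1 - 1, q.2) p := ⟨by simp only; omega, hq.2⟩
  by_cases hb : Hmem lt (q.1, q.2 - 1) p (q.1 + q.2 - 1)
  · refine ⟨(q.1 - 1, q.2), hB, by simp only; omega, ?_⟩
    rw [mem_seg9 lt _ _ hB]
    have hb' := hmem_mono' lt p (q.1, q.2 - 1) (q.1 - 1, q.2) (by simp only; omega)
      (by simp only; omega) _ hb
    have e : q.1 - 1 + q.2 = q.1 + q.2 - 1 := by ring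
    have h1 := cnt9_one (Hmem lt (q.1 - 1, q.2) p) (q.1 + q.2 - 1)
    rw [if_pos hb', sub_add_cancel] at h1
    simp only [e, h1]
    exact ⟨by omega, by omega, by omega⟩
  · refine ⟨(q.1, q.2 - 1), hA, by simp only; omega, ?_⟩
    rw [mem_seg9 lt _ _ hA]
    have e : q.1 + (q.2 - 1) = q.1 + q.2 - 1 := by ring
    have h1 := cnt9_one (Hmem lt (q.1, q.2 - 1) p) (q.1 + q.2 - 1)
    rw [if_neg hb, sub_add_cancel] at h1
    simp only [e, h1]
    exact ⟨by omega, by omega, by omega⟩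

theorem genR_pos (p q : Pt) (h : Quad1 p q) : genR (fun _ => lt) p q = seg lt p q := by
  unfold genR
  exact if_pos h

theorem genR_neg (p q : Pt) (h : Quad1 q p) : genR (fun _ => lt) p q = seg lt q p := by
  unfold genR
  split_ifs with h1
  · have : p = q := Prod.ext (le_antisymm h1.1 h.1) (le_antisymm h1.2 h.2)
    rw [this]
  · rfl

theorem gen_sub (p q : Pt) (h : Quad1 p q) (r s : Pt) (hr : r ∈ seg lt p q)
    (hs : s ∈ seg lt p q) (hrs : NonnegPair r s) : genR (fun _ => lt) r s ⊆ seg lt p q := by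
  rcases hrs with h1 | h1
  · rw [genR_pos lt r s h1]
    exact seg_sub lt p q h r s hr hs h1
  · rw [genR_neg lt r s h1]
    exact seg_sub lt p q h s r hs hr h1

end Aux

/-- assigning one fixed linear order to every point of `ℤ²` generates a
nonnegative-slope digital segment system satisfying (S1)-(S5), i.e. a CDS. -/
theorem statement9 (lt : ℤ → ℤ → Prop) [IsStrictTotalOrder ℤ lt] :
    IsCDS (genR fun _ => lt) := by
  intro p q hpq
  rcases hpq with h | h
  · have h' : Quad1 p q := h
    rw [genR_pos lt p q h', genR_neg lt q p h']
    refine ⟨seg_path lt p q h', rfl, fun r s => gen_sub lt p q h' r s, ?_, ?_, ?_⟩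
    · obtain ⟨r, hr, hlt, hm⟩ := ext_right lt p q h'
      refine ⟨r, ?_, Or.inl hr, ?_⟩
      · intro hc
        have := ((mem_seg9 lt p q h' r).1 hc).2.1
        omega
      · rw [genR_pos lt p r hr]
        exact seg_sub lt p r hr p q (seg_left lt p r hr) hm h'
    · rintro e r ⟨h1, h2, -⟩
      omega
    · rintro e r ⟨-, -, h1, h2, -⟩
      omega
  · have h' : Quad1 q p := h
    rw [genR_neg lt p q h', genR_pos lt q p h']
    refine ⟨path_symm (seg_path lt q p h'), rfl, fun r s => gen_sub lt q p h' r s, ?_, ?_, ?_⟩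
    · obtain ⟨r, hr, hlt, hm⟩ := ext_left lt p q h'
      refine ⟨r, ?_, Or.inr hr, ?_⟩
      · intro hc
        have := ((mem_seg9 lt q p h' r).1 hc).1
        omega
      · rw [genR_neg lt p r hr]
        exact seg_sub lt r p hr q p hm (seg_right lt r p hr) h'
    · rintro e r ⟨h1, h2, -⟩
      omega
    · rintro e r ⟨-, -, h1, h2, -⟩
      omega
end
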